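/- arXiv:1109.3462 — 11 statements merged into one kernel-verified Lean document; each statement's English description precedes it below -/
import Mathlib

section
/- Let E be an invertible n×n matrix over ℚ, let q, q̂ : Fin n → ℚ and d, d̂ ∈ ℚ with d ≠ 0 and d̂ ≠ 0, and assume that for every j, ∑_i q_i·E_{ij} = d (q is a weight system of degree d for the exponent matrix E) and that for every j, ∑_i q̂_i·E_{ji} = d̂ (q̂ is a weight system of degree d̂ for the transposed exponent matrix Eᵀ). If ∑_i q_i = d (the Calabi–Yau condition holds for the weights of E), then ∑_i q̂_i = d̂ (the Calabi–Yau condition holds for the weights of Eᵀ). -/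
/-- The Calabi–Yau condition for the weights of an invertible polynomial transfers
to the weights of the transposed polynomial. -/
theorem calabiYau_dual (n : ℕ) (E : Matrix (Fin n) (Fin n) ℚ) (hE : IsUnit E.det)
    (q qhat : Fin n → ℚ) (d dhat : ℚ) (hd : d ≠ 0) (hdhat : dhat ≠ 0)
    (hq : ∀ j, ∑ i, q i * E i j = d)
    (hqhat : ∀ j, ∑ i, qhat i * E j i = dhat)
    (hCY : ∑ i, q i = d) :
    ∑ i, qhat i = dhat := by
  -- Evaluate the bilinear form `∑ i j, q i * E i j * qhat j` in both orders of summation.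
  apply mul_left_cancel₀ hd
  calc d * ∑ j, qhat j = ∑ j, ∑ i, q i * (qhat j * E i j) := by
        rw [Finset.mul_sum]
        refine Finset.sum_congr rfl fun j _ => ?_
        rw [← hq j, Finset.sum_mul]
        exact Finset.sum_congr rfl fun i _ => by ring
    _ = ∑ i, ∑ j, q i * (qhat j * E i j) := Finset.sum_comm
    _ = ∑ i, q i * dhat := by simp only [← Finset.mul_sum, hqhat]
    _ = d * dhat := by rw [← Finset.sum_mul, hCY]
end

section
/- Let E be an invertible n×n matrix over ℚ, q : Fin n → ℚ, and d ∈ ℚ with d ≠ 0 such that E·q = (d,…,d)ᵀ (every row of E dotted with q equals d). Let M be the (n+1)×(n+1) matrix over ℚ obtained by bordering E: the first column of M consists entirely of 1's, the top-right n×n block is E, and the remaining entries of the bottom row are all 1 (i.e. M is the block matrix with blocks: an n×1 all-ones column, E, a 1×1 entry 1, and a 1×n all-ones row). Then ∑_i q_i = d if and only if det M = 0. -/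
/-! The kernel of the bordered matrix is computed explicitly. A vector `(c, w)` lies in it iff
`E w = (-c, …, -c)` and `c + ∑ wᵢ = 0`. Since `E q = (d, …, d)`, the vector `d w + c q` is in the
kernel of the invertible `E`, so `d w = -c q`: up to scaling, the only candidate is `(-d, q)`, and it
satisfies the last equation exactly when `∑ qᵢ = d`. -/

/-- The Calabi–Yau condition `∑ qᵢ = d` is equivalent to the vanishing of the
determinant of the bordered exponent matrix. -/
theorem calabiYau_iff_det_bordered_eq_zero (n : ℕ)
    (E : Matrix (Fin n) (Fin n) ℚ) (hE : IsUnit E.det)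
    (q : Fin n → ℚ) (d : ℚ) (hd : d ≠ 0)
    (hq : ∀ i, ∑ j, E i j * q j = d)
    (M : Matrix (Fin (n + 1)) (Fin (n + 1)) ℚ)
    (hM : M = Matrix.of fun i j =>
      Fin.lastCases (motive := fun _ => ℚ) 1
        (fun i' => Fin.cases (motive := fun _ => ℚ) 1 (fun j' => E i' j') j) i) :
    (∑ i, q i = d) ↔ M.det = 0 := by
  have key : ∀ v : Fin (n + 1) → ℚ, M.mulVec v = 0 ↔
      (∀ i, v 0 + ∑ j, E i j * v (Fin.succ j) = 0) ∧ v 0 + ∑ j, v (Fin.succ j) = 0 := by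
    intro v
    rw [funext_iff, Fin.forall_fin_succ']
    simp [hM, Matrix.mulVec, dotProduct, Fin.sum_univ_succ]
  rw [← Matrix.exists_mulVec_eq_zero_iff]
  constructor
  · intro h
    refine ⟨Fin.cons (-d) q, fun h0 => hd ?_, (key _).2 ⟨fun i => ?_, ?_⟩⟩
    · simpa using congrFun h0 0
    · simp [hq]
    · simp [h]
  · rintro ⟨v, hv, hMv⟩
    obtain ⟨h1, h2⟩ := (key v).1 hMv
    have hw : (fun j => d * v (Fin.succ j) + v 0 * q j) = 0 := by
      apply Matrix.eq_zero_of_mulVec_eq_zero hE.ne_zero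
      ext i
      have e : ∑ j, E i j * (d * v (Fin.succ j) + v 0 * q j)
          = d * ∑ j, E i j * v (Fin.succ j) + v 0 * ∑ j, E i j * q j := by
        rw [Finset.mul_sum, Finset.mul_sum, ← Finset.sum_add_distrib]
        exact Finset.sum_congr rfl fun j _ => by ring
      simp only [Matrix.mulVec, dotProduct, Pi.zero_apply]
      rw [e, hq]
      linear_combination d * h1 i
    have hw' : ∀ j, d * v (Fin.succ j) + v 0 * q j = 0 := congrFun hw
    have hc : v 0 ≠ 0 := by
      intro hc
      apply hv
      ext i
      refine Fin.cases hc (fun j => ?_) i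
      simpa [hc, hd] using hw' j
    have hs : d * ∑ j, v (Fin.succ j) + v 0 * ∑ j, q j = 0 := by
      rw [Finset.mul_sum, Finset.mul_sum, ← Finset.sum_add_distrib]
      exact Finset.sum_eq_zero fun j _ => hw' j
    apply mul_left_cancel₀ hc
    linear_combination hs - d * h2
end

section
/- Let n ≥ 2. Let k : Fin n → ℕ with k_j ≥ 2 for all j, and let σ : Fin n → Option (Fin n) satisfy σ(j) ≠ some j for all j and be injective on {j : σ(j) ≠ none}; define the exponent matrix E by E_{ij} = (if i = j then k_j else 0) + (if σ(j) = some i then 1 else 0), so that g := ∑_j ∏_i X_i^{E_{ij}} is a sum of chain and loop polynomials (an invertible polynomial). Assume there exist positive integers q : Fin n → ℕ and d with ∑_i q_i·E_{ij} = d for every j (g is quasihomogeneous of degree d with weights q) and ∑_i q_i = d (the Calabi–Yau condition). Let K := ℚ(s) be the field of rational functions in one variable s over ℚ, and set f := ∑_j ∏_i X_i^{E_{ij}} + s·∏_i X_i in the polynomial ring K[X_1,…,X_n]. Then the monomial (∏_i X_i)^{n−1} belongs to the ideal of K[X_1,…,X_n] generated by the partial derivatives ∂f/∂X_1, …, ∂f/∂X_n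 (the Jacobian ideal J(f)). -/
open MvPolynomial

/-!
Let `J(g)` be the Jacobian ideal of the invertible polynomial `g`. The Calabi–Yau condition makes
`(∏ xᵢ)^(n-1)` a monomial of degree `D = (n - 1) d`, which is larger than
`∑ (d - 2 qᵢ) = (n - 2) d`, the top degree of the Milnor algebra of `g`. So at `s = 0` all monomials
of degree `D` lie in the Jacobian ideal, and this extends to transcendental `s`.

Membership is treated dually. If `(∏ xᵢ)^(n-1)` were not in `J(f)`, a linear functional over `ℚ(s)`
would vanish on `J(f)` but not on this monomial. After clearing denominators, its values on the
monomials of degree `D` are polynomials in `s` that satisfy the linear relations coming from the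
`∂f/∂xᵢ` (`Family`). Setting `s = 0` gives a rational solution `A` of the relations of `g`
(`Kills`). Such a solution vanishes (`Kills.eq_zero`), so all values are divisible by `s`. The
quotients by `s` satisfy the same relations, and infinite descent shows that all values are zero.

That `A = 0` is the statement that `J(g)` contains all monomials of degree `D`. If `σ p = i`, then
`∂g/∂xᵢ` rewrites `x_p ^ k_p` as `-kᵢ xᵢ^(kᵢ - 1) x_{σ i}`, with a coefficient of absolute value at
least `2`; so a monomial with the smallest nonzero `|A v|` has all exponents `vᵢ < kᵢ`. For
loops this already bounds its degree by `∑ qᵢ (kᵢ - 1) = ∑ (d - 2 qᵢ)`. For a chain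
`x₁^k₁ x₂ + ⋯` the bound must be improved by `q₁`. A monomial outside `J(g)` either has
`v₁ < k₁ - 1`, or `v₂ = 0`; in the second case either `v₃ < k₃ - 1`, or `v₄ = 0`, and so on
(`Kills.active`). The resulting losses in degree add up to at least `q₁` (`Kills.reduced`).
-/

section Relations

open Finsupp (single)

variable {ι : Type*} [Fintype ι] [DecidableEq ι]

/-! ### Relations of the invertible polynomial -/

/-- The weighted degree `∑ qᵢ vᵢ` of the exponent vector `v`. -/
def wt (q : ι → ℕ) (v : ι →₀ ℕ) : ℕ := ∑ i, q i * v i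

omit [DecidableEq ι] in
lemma wt_add (q : ι → ℕ) (u v : ι →₀ ℕ) : wt q (u + v) = wt q u + wt q v := by
  simp [wt, mul_add, Finset.sum_add_distrib]

lemma wt_single (q : ι → ℕ) (i : ι) (m : ℕ) : wt q (single i m) = q i * m := by
  simp [wt, Finsupp.single_apply]

/-- The exponent vector of the tail variable `x_{σ j}` of a monomial `x_j ^ k_j * x_{σ j}`; it is
`0` when there is no tail. -/
noncomputable def tailExp (o : Option ι) : ι →₀ ℕ := o.elim 0 fun i => single i 1

lemma wt_tail (q : ι → ℕ) (o : Option ι) : wt q (tailExp o) = o.elim 0 q := by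
  cases o with
  | none => simp [tailExp, wt]
  | some i => simp [tailExp, wt_single]

/-- The vertices of a chain at which the exponent pattern `(k₁ - 1, 0, k₃ - 1, 0, …)` of `v` has
not yet been broken: the start of each chain is active, and if `a` is active with `v a = k a - 1`,
then so is `σ (σ a)`. -/
inductive Active (k : ι → ℕ) (σ : ι → Option ι) (v : ι →₀ ℕ) : ι → Prop
  | start (a : ι) (h : ∀ p, σ p ≠ some a) : Active k σ v a
  | step (a b c : ι) (ha : Active k σ v a) (hv : v a + 1 = k a) (hab : σ a = some b)
      (hbc : σ b = some c) : Active k σ v c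

/-- `A` is a functional on exponent vectors of degree `D` that is compatible with the relations
`kᵢ xᵢ^(kᵢ - 1) x_{σ i} + x_p ^ k_p = 0` for `σ p = i`, where the second term is missing if `i` is
the start of a chain. These are the partial derivatives of the invertible polynomial. -/
structure Kills (k : ι → ℕ) (σ : ι → Option ι) (q : ι → ℕ) (d D : ℕ)
    (A : (ι →₀ ℕ) → ℚ) : Prop where
  pair : ∀ p i u, σ p = some i → wt q u + d = D + q i →
    (k i : ℚ) * A (u + (single i (k i - 1) + tailExp (σ i))) + A (u + single p (k p)) = 0
  start : ∀ i u, (∀ p, σ p ≠ some i) → wt q u + d = D + q i →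
    A (u + (single i (k i - 1) + tailExp (σ i))) = 0

variable {k : ι → ℕ} {σ : ι → Option ι} {q : ι → ℕ} {d D : ℕ} {A : (ι →₀ ℕ) → ℚ}

/-- Each monomial of `g` lies in the Jacobian ideal of `g`. The Euler-type relations
`kᵢ Mᵢ + M_p = 0` with `kᵢ ≥ 2` show that the largest of the values `|A (u Mⱼ)|` vanishes. -/
lemma Kills.full (hA : Kills k σ q d D A) (hk : ∀ j, 2 ≤ k j) (u : ι →₀ ℕ)
    (hu : wt q u + d = D) (j : ι) : A (u + (single j (k j) + tailExp (σ j))) = 0 := by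
  have : Nonempty ι := ⟨j⟩
  obtain ⟨i, hi⟩ := Finite.exists_max fun j => |A (u + (single j (k j) + tailExp (σ j)))|
  have hs : u + single i 1 + (single i (k i - 1) + tailExp (σ i))
      = u + (single i (k i) + tailExp (σ i)) := by
    have h1 : single i (k i) = single i 1 + single i (k i - 1) := by
      rw [← Finsupp.single_add]; congr 1; have := hk i; omega
    rw [h1]; abel
  have hw : wt q (u + single i 1) + d = D + q i := by
    rw [wt_add, wt_single]; omega
  have h0 : A (u + (single i (k i) + tailExp (σ i))) = 0 := by
    by_cases hp : ∃ p, σ p = some i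
    · obtain ⟨p, hp⟩ := hp
      have h := hA.pair p i _ hp hw
      have e : u + single i 1 + single p (k p) = u + (single p (k p) + tailExp (σ p)) := by
        rw [hp]; simp only [tailExp, Option.elim]; abel
      rw [hs, e] at h
      have hm := hi p
      have hk2 : (2 : ℚ) ≤ k i := by exact_mod_cast hk i
      have h' : A (u + (single p (k p) + tailExp (σ p)))
          = -((k i : ℚ) * A (u + (single i (k i) + tailExp (σ i)))) := by linarith
      simp only [h', abs_neg, abs_mul, Nat.abs_cast] at hm
      rw [← abs_eq_zero]
      nlinarith [abs_nonneg (A (u + (single i (k i) + tailExp (σ i))))]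
    · push Not at hp
      have h := hA.start i _ hp hw
      rwa [hs] at h
  have := hi j
  simp only [h0, abs_zero] at this
  exact abs_eq_zero.mp (le_antisymm this (abs_nonneg _))

/-- The monomials `⋯ x_a^(k_a - 1) x_{σ a}` with `a` active lie in the Jacobian ideal: replacing
`x_a^(k_a - 1) x_{σ a}` by `x_b^{k_b}` with `σ b = a` moves two steps back towards the start of
the chain. The set `s` contains all vertices before `a` on the chain, but not
`a` itself; there the exponents must dominate those of `v`. -/
lemma Kills.active (hA : Kills k σ q d D A) (hk : ∀ j, 2 ≤ k j)
    (hdeg : ∀ j, q j * k j + (σ j).elim 0 q = d)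
    (hσ : ∀ j, σ j ≠ some j) (hinj : ∀ p p' i, σ p = some i → σ p' = some i → p = p')
    {v : ι →₀ ℕ} {a : ι} (ha : Active k σ v a) :
    ∃ s : Set ι, a ∉ s ∧ (∀ x y, σ x = some y → (y ∈ s ∨ y = a) → x ∈ s) ∧
      ∀ w : ι →₀ ℕ, wt q w = D → (∀ i ∈ s, v i ≤ w i) →
        single a (k a - 1) + tailExp (σ a) ≤ w → A w = 0 := by
  have hwt : ∀ i u, wt q (u + (single i (k i - 1) + tailExp (σ i))) = D →
      wt q u + d = D + q i := by
    intro i u h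
    rw [wt_add, wt_add, wt_single, wt_tail] at h
    have h1 := hdeg i
    have h2 : q i * k i = q i * (k i - 1) + q i := by
      rw [← Nat.mul_succ]; congr 1; have := hk i; omega
    omega
  induction ha with
  | start a h =>
    refine ⟨∅, by simp, ?_, ?_⟩
    · rintro x y hxy (h' | rfl)
      · exact h'
      · exact absurd hxy (h x)
    · intro w hw _ hle
      obtain ⟨u, rfl⟩ := exists_add_of_le hle
      rw [add_comm] at hw ⊢
      exact hA.start a u h (hwt a u hw)
  | step a b c _ hv hab hbc ih =>
    obtain ⟨s, has, hs, hmem⟩ := ih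
    have hbs : b ∉ s := fun hb => has (hs a b hab (Or.inl hb))
    have hba : b ≠ a := by rintro rfl; exact hσ _ hab
    have hcs : c ∉ s := fun hc => hbs (hs b c hbc (Or.inl hc))
    have hca : c ≠ a := fun hc => hbs (hs b c hbc (Or.inr hc))
    have hcb : c ≠ b := by rintro rfl; exact hσ _ hbc
    refine ⟨s ∪ {a, b}, by simp [hcs, hca, hcb], ?_, ?_⟩
    · intro x y hxy hy
      simp only [Set.mem_union, Set.mem_insert_iff, Set.mem_singleton_iff] at hy ⊢
      rcases hy with (hy | rfl | rfl) | rfl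
      · exact Or.inl (hs x y hxy (Or.inl hy))
      · exact Or.inl (hs x y hxy (Or.inr rfl))
      · exact Or.inr (Or.inl (hinj x a _ hxy hab))
      · exact Or.inr (Or.inr (hinj x b _ hxy hbc))
    · intro w hw hdom hle
      obtain ⟨u, rfl⟩ := exists_add_of_le hle
      rw [add_comm] at hw hdom ⊢
      have hu := hwt c u hw
      have hrel := hA.pair b c u hbc hu
      -- Neither `c` nor its tail is one of the vertices before `b`.
      have hz : ∀ i, i ∈ s ∨ i = a → (single c (k c - 1) + tailExp (σ c)) i = 0 := by
        intro i hi
        have h1 : c ≠ i := by rintro rfl; exact hi.elim hcs hca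
        have h2 : tailExp (σ c) i = 0 := by
          cases hc : σ c with
          | none => simp [tailExp]
          | some e =>
            have : e ≠ i := by rintro rfl; exact hcs (hs c e hc hi)
            simp [tailExp, this]
        simp [h1, h2]
      have hdom' : ∀ i, i ∈ s ∨ i = a → v i ≤ u i := by
        intro i hi
        have := hdom i (by rcases hi with hi | rfl <;> simp [*])
        rwa [Finsupp.add_apply, hz i hi, add_zero] at this
      have h0 : A (u + single b (k b)) = 0 := by
        apply hmem
        · rw [wt_add, wt_single]
          have := hdeg b
          rw [hbc] at this
          simp only [Option.elim] at this
          omega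
        · intro i hi
          rw [Finsupp.add_apply]
          exact (hdom' i (Or.inl hi)).trans (Nat.le_add_right _ _)
        · refine add_le_add ?_ ?_
          · rw [Finsupp.single_le_iff]
            have := hdom' a (Or.inr rfl)
            omega
          · rw [hab, tailExp, Option.elim, Finsupp.single_le_iff, Finsupp.single_eq_same]
            have := hk b
            omega
      rw [h0, add_zero] at hrel
      have : (k c : ℚ) ≠ 0 := by
        have := hk c
        exact_mod_cast (by omega : k c ≠ 0)
      exact (mul_eq_zero.mp hrel).resolve_left this

/-- A sum over the predecessors of `i`, of which there is at most one. -/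
lemma sum_pred (hinj : ∀ p p' i, σ p = some i → σ p' = some i → p = p') (F : ι → ℤ)
    {p i : ι} (hp : σ p = some i) : (∑ p, if σ p = some i then F p else 0) = F p := by
  rw [Finset.sum_eq_single p]
  · simp [hp]
  · intro b _ hb
    rw [if_neg]
    exact fun h => hb (hinj b p i h hp)
  · simp

/-- A monomial `v` with all `vᵢ < kᵢ` outside the Jacobian ideal has degree at most
`∑ (d - 2 qᵢ)`. Each start `i` of a chain carries a debt `qᵢ`, which is passed along the chain
and paid from the defects `qᵢ (kᵢ - 1 - vᵢ)`. -/
lemma Kills.reduced (hA : Kills k σ q d D A) (hk : ∀ j, 2 ≤ k j)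
    (hdeg : ∀ j, q j * k j + (σ j).elim 0 q = d)
    (hσ : ∀ j, σ j ≠ some j) (hinj : ∀ p p' i, σ p = some i → σ p' = some i → p = p')
    {v : ι →₀ ℕ} (hv : ∀ i, v i < k i) (hvD : wt q v = D) (hAv : A v ≠ 0) :
    D + 2 * ∑ i, q i ≤ Fintype.card ι * d := by
  classical
  -- At a full active vertex there is a tailExp, and its exponent is zero.
  have key : ∀ a, Active k σ v a → v a + 1 = k a → ∃ b, σ a = some b ∧ v b = 0 := by
    intro a ha hva
    obtain ⟨s, -, -, hmem⟩ := hA.active hk hdeg hσ hinj ha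
    by_contra hcon
    push Not at hcon
    refine hAv (hmem v hvD (fun _ _ => le_rfl) ?_)
    cases hs : σ a with
    | none =>
      rw [tailExp, Option.elim, add_zero, Finsupp.single_le_iff]; omega
    | some b =>
      have hb := hcon b hs
      have hab : a ≠ b := by rintro rfl; exact hσ _ hs
      intro i
      simp only [tailExp, Option.elim, Finsupp.add_apply, Finsupp.single_apply]
      split_ifs with h1 h2 h2
      · exact absurd (h1.trans h2.symm) hab
      · subst h1; omega
      · subst h2; omega
      · omega
  let B : ι → Prop := fun b => ∃ a, Active k σ v a ∧ v a + 1 = k a ∧ σ a = some b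
  let qt : ι → ℤ := fun i => (((σ i).elim 0 q : ℕ) : ℤ)
  let out : ι → ℤ := fun i =>
    if Active k σ v i ∧ v i + 1 = k i then (q i : ℤ) else if B i then qt i else 0
  let src : ι → ℤ := fun i => if ∀ p, σ p ≠ some i then (q i : ℤ) else 0
  let defect : ι → ℤ := fun i => (q i : ℤ) * (k i - 1 - v i)
  have hout0 : ∀ i, 0 ≤ out i := by
    intro i; simp only [out, qt]; split_ifs <;> positivity
  have hdegZ : ∀ j, (q j : ℤ) * k j + qt j = d := by
    intro j; simp only [qt]; exact_mod_cast hdeg j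
  have hdef : ∀ i, 0 ≤ defect i := by
    intro i
    have := hv i
    exact mul_nonneg (by positivity) (by omega)
  -- An active vertex pays its own debt or passes it on.
  have hact : ∀ i, Active k σ v i → (q i : ℤ) ≤ defect i + out i := by
    intro i hi
    by_cases he : v i + 1 = k i
    · have : out i = q i := by simp only [out]; rw [if_pos ⟨hi, he⟩]
      have := hdef i
      omega
    · have h1 : (1 : ℤ) ≤ k i - 1 - v i := by have := hv i; omega
      have : (q i : ℤ) * 1 ≤ defect i := mul_le_mul_of_nonneg_left h1 (by positivity)
      have := hout0 i
      omega
  have hlocal : ∀ i, src i + (∑ p, if σ p = some i then out p else 0) ≤ defect i + out i := by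
    intro i
    by_cases hp : ∃ p, σ p = some i
    · obtain ⟨p, hp⟩ := hp
      have hs : src i = 0 := by
        simp only [src]; rw [if_neg]; exact fun h => h p hp
      rw [hs, zero_add, sum_pred hinj out hp]
      by_cases h1 : Active k σ v p ∧ v p + 1 = k p
      · obtain ⟨b, hb, hvb⟩ := key p h1.1 h1.2
        obtain rfl : i = b := by rw [hp] at hb; exact Option.some.inj hb
        have ho : out p = q p := by simp only [out]; rw [if_pos h1]
        have hki := hk i
        have ho' : out i = qt i := by
          simp only [out]
          rw [if_neg (by omega), if_pos ⟨p, h1.1, h1.2, hp⟩]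
        have e1 := hdegZ p
        have e2 := hdegZ i
        have e3 : qt p = q i := by simp [qt, hp]
        have hkp : (2 : ℤ) ≤ k p := by exact_mod_cast hk p
        have e4 : defect i = q i * k i - q i := by
          simp only [defect, hvb]; push_cast; ring
        rw [ho, ho', e4]
        nlinarith [Int.natCast_nonneg (q p)]
      · by_cases h2 : B p
        · have ho : out p = q i := by
            simp only [out]; rw [if_neg h1, if_pos h2]; simp [qt, hp]
          obtain ⟨a, ha, hva, hap⟩ := h2
          rw [ho]
          exact hact i (Active.step a p i ha hva hap hp)
        · have ho : out p = 0 := by simp only [out]; rw [if_neg h1, if_neg h2]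
          rw [ho]
          exact add_nonneg (hdef i) (hout0 i)
    · push Not at hp
      have h0 : (∑ p, if σ p = some i then out p else 0) = 0 :=
        Finset.sum_eq_zero fun p _ => if_neg (hp p)
      have hs : src i = q i := by simp only [src]; rw [if_pos hp]
      rw [h0, hs, add_zero]
      exact hact i (Active.start i hp)
  -- Nothing is passed on from the end of a chain, so the passed debts cancel.
  have hflow : (∑ i, ∑ p, if σ p = some i then out p else 0) = ∑ p, out p := by
    rw [Finset.sum_comm]
    refine Finset.sum_congr rfl fun p _ => ?_
    cases hp : σ p with
    | none =>
      have h1 : ¬ (Active k σ v p ∧ v p + 1 = k p) := by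
        rintro ⟨h1, h2⟩
        obtain ⟨b, hb, -⟩ := key p h1 h2
        simp [hp] at hb
      simp [out, h1, qt, hp]
    | some i => simp
  have hsum := Finset.sum_le_sum fun i (_ : i ∈ Finset.univ) => hlocal i
  simp only [Finset.sum_add_distrib] at hsum
  rw [hflow] at hsum
  have hq : ∑ i, (q i : ℤ) = ∑ i, src i + ∑ i, qt i := by
    have : ∑ p, qt p = ∑ i, ∑ p, if σ p = some i then (q i : ℤ) else 0 := by
      rw [Finset.sum_comm]
      refine Finset.sum_congr rfl fun p _ => ?_
      cases hp : σ p with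
      | none => simp [qt, hp]
      | some i => simp [qt, hp]
    rw [this, ← Finset.sum_add_distrib]
    refine Finset.sum_congr rfl fun i _ => ?_
    by_cases hp : ∃ p, σ p = some i
    · obtain ⟨p, hp⟩ := hp
      rw [sum_pred hinj (fun _ => (q i : ℤ)) hp]
      have hs : src i = 0 := by
        simp only [src]; rw [if_neg]; exact fun h => h p hp
      omega
    · push Not at hp
      have hs : src i = q i := by simp only [src]; rw [if_pos hp]
      rw [hs, Finset.sum_eq_zero fun p _ => if_neg (hp p), add_zero]
  have hdefs : ∑ i, defect i = ∑ i, (q i : ℤ) * k i - ∑ i, (q i : ℤ) - D := by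
    rw [← hvD, wt]
    push_cast
    rw [← Finset.sum_sub_distrib, ← Finset.sum_sub_distrib]
    exact Finset.sum_congr rfl fun i _ => by simp only [defect]; ring
  have htot : ∑ i, (q i : ℤ) * k i + ∑ i, qt i = Fintype.card ι * d := by
    rw [← Finset.sum_add_distrib, Finset.sum_congr rfl fun i _ => hdegZ i]
    simp
  zify
  linarith

omit [DecidableEq ι] in
lemma finite_wt (hq : ∀ i, 1 ≤ q i) : {v : ι →₀ ℕ | wt q v = D}.Finite := by
  classical
  refine (Set.finite_Iic (Finsupp.equivFunOnFinite.symm fun _ : ι => D)).subset ?_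
  intro v hv i
  have h1 : q i * v i ≤ wt q v :=
    Finset.single_le_sum (f := fun i => q i * v i) (fun _ _ => Nat.zero_le _) (Finset.mem_univ i)
  have h2 : v i ≤ q i * v i := Nat.le_mul_of_pos_left _ (hq i)
  simp only [Set.mem_ofPred_eq] at hv
  simp only [Finsupp.equivFunOnFinite_symm_apply_apply]
  omega

/-- Above degree `∑ (d - 2 qᵢ)` every monomial lies in the Jacobian ideal of `g`. A monomial `v`
with `|A v|` minimal among the nonzero values cannot be divisible by any `x_p ^ k_p`, because
the relation `x_p ^ k_p = -kᵢ xᵢ^(kᵢ - 1) x_{σ i}` leads to a value at most half as large. -/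
lemma Kills.eq_zero (hA : Kills k σ q d D A) (hk : ∀ j, 2 ≤ k j)
    (hq : ∀ i, 1 ≤ q i) (hdeg : ∀ j, q j * k j + (σ j).elim 0 q = d)
    (hσ : ∀ j, σ j ≠ some j) (hinj : ∀ p p' i, σ p = some i → σ p' = some i → p = p')
    (hD : Fintype.card ι * d < D + 2 * ∑ i, q i)
    {v : ι →₀ ℕ} (hv : wt q v = D) : A v = 0 := by
  by_contra hne
  have hfin : {v : ι →₀ ℕ | wt q v = D ∧ A v ≠ 0}.Finite :=
    (finite_wt (D := D) hq).subset fun v hv => hv.1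
  obtain ⟨w, ⟨hwD, hw0⟩, hmin⟩ := Set.exists_min_image _ (fun v => |A v|) hfin ⟨v, hv, hne⟩
  refine absurd (hA.reduced hk hdeg hσ hinj (v := w) ?_ hwD hw0) (by omega)
  intro p
  by_contra hp
  obtain ⟨u, rfl⟩ := exists_add_of_le (Finsupp.single_le_iff.mpr (not_lt.mp hp))
  rw [add_comm] at hwD hw0 hmin
  have hdp := hdeg p
  rw [wt_add, wt_single] at hwD
  cases hs : σ p with
  | none =>
    rw [hs] at hdp
    simp only [Option.elim] at hdp
    have := hA.full hk u (by omega) p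
    rw [hs, tailExp, Option.elim, add_zero] at this
    exact hw0 this
  | some i =>
    rw [hs] at hdp
    simp only [Option.elim] at hdp
    have hrel := hA.pair p i u hs (by omega)
    set v' := u + (single i (k i - 1) + tailExp (σ i)) with hv'
    have hA' : A (u + single p (k p)) = -(k i * A v') := by linarith
    have hv0 : A v' ≠ 0 := by
      intro h; rw [h] at hA'; simp at hA'; exact hw0 hA'
    have hvD : wt q v' = D := by
      rw [hv', wt_add, wt_add, wt_single, wt_tail]
      have h1 := hdeg i
      have h2 : q i * k i = q i * (k i - 1) + q i := by
        rw [← Nat.mul_succ]; congr 1; have := hk i; omega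
      omega
    have h := hmin v' ⟨hvD, hv0⟩
    simp only [hA', abs_neg, abs_mul, Nat.abs_cast] at h
    have hk2 : (2 : ℚ) ≤ k i := by exact_mod_cast hk i
    nlinarith [abs_pos.mpr hv0]

/-! ### Descent in the parameter `s` -/

/-- The exponent vector of the monomial `x_j ^ k_j * x_{σ j}` of `g`. -/
noncomputable def expVec (k : ι → ℕ) (σ : ι → Option ι) (j : ι) : ι →₀ ℕ :=
  single j (k j) + tailExp (σ j)

/-- The exponent vector of `∏ xᵢ`. -/
noncomputable def ones : ι →₀ ℕ := Finsupp.equivFunOnFinite.symm fun _ => 1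

omit [Fintype ι] [DecidableEq ι] in
lemma expVec_self (hσ : ∀ j, σ j ≠ some j) (i : ι) : expVec k σ i i = k i := by
  unfold expVec
  cases h : σ i with
  | none => simp [tailExp]
  | some e =>
    have : e ≠ i := by rintro rfl; exact hσ _ h
    simp [tailExp, this]

omit [Fintype ι] [DecidableEq ι] in
lemma expVec_pred (hσ : ∀ j, σ j ≠ some j) {p i : ι} (h : σ p = some i) :
    expVec k σ p i = 1 := by
  have : p ≠ i := by rintro rfl; exact hσ _ h
  simp [expVec, h, tailExp, this]

omit [Fintype ι] [DecidableEq ι] in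
lemma expVec_other {j i : ι} (h : σ j ≠ some i) (hji : j ≠ i) : expVec k σ j i = 0 := by
  unfold expVec
  cases hs : σ j with
  | none => simp [tailExp, hji]
  | some e =>
    have : e ≠ i := by rintro rfl; exact h hs
    simp [tailExp, hji, this]

omit [Fintype ι] [DecidableEq ι] in
lemma expVec_self_sub (hk : ∀ j, 2 ≤ k j) (i : ι) :
    expVec k σ i - single i 1 = single i (k i - 1) + tailExp (σ i) := by
  have h1 : single i (k i) = single i (k i - 1) + single i 1 := by
    rw [← Finsupp.single_add]; congr 1; have := hk i; omega
  rw [expVec, h1, add_right_comm, add_tsub_cancel_right]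

omit [Fintype ι] [DecidableEq ι] in
lemma expVec_pred_sub {p i : ι} (h : σ p = some i) :
    expVec k σ p - single i 1 = single p (k p) := by
  rw [expVec, h, tailExp, Option.elim, add_tsub_cancel_right]

lemma wt_expVec (hdeg : ∀ j, q j * k j + (σ j).elim 0 q = d) (j : ι) :
    wt q (expVec k σ j) = d := by
  rw [expVec, wt_add, wt_single, wt_tail, hdeg]

/-- The values of `b` on the exponent vectors of degree `D` satisfy the relations given by the
partial derivatives of `g + s ∏ xᵢ`, with `s` the variable of `ℚ[s]`. -/
def Family (k : ι → ℕ) (σ : ι → Option ι) (q : ι → ℕ) (d D : ℕ)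
    (b : (ι →₀ ℕ) → Polynomial ℚ) : Prop :=
  ∀ i u, wt q u + d = D + q i →
    ∑ j, (expVec k σ j i : Polynomial ℚ) * b (u + (expVec k σ j - single i 1))
      + Polynomial.X * b (u + (ones - single i 1)) = 0

omit [DecidableEq ι] in
/-- Specialisation at `s = 0`. -/
lemma Family.kills {b : (ι →₀ ℕ) → Polynomial ℚ} (hb : Family k σ q d D b)
    (hk : ∀ j, 2 ≤ k j) (hσ : ∀ j, σ j ≠ some j)
    (hinj : ∀ p p' i, σ p = some i → σ p' = some i → p = p') :
    Kills k σ q d D fun v => (b v).eval 0 := by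
  have h0 : ∀ i u, wt q u + d = D + q i →
      ∑ j, (expVec k σ j i : ℚ) * (b (u + (expVec k σ j - single i 1))).eval 0 = 0 := by
    intro i u h
    have := congrArg (Polynomial.eval 0) (hb i u h)
    simpa [Polynomial.eval_finsetSum] using this
  constructor
  · intro p i u hp hu
    have hpi : i ≠ p := by rintro rfl; exact hσ _ hp
    have h := h0 i u hu
    rw [Fintype.sum_eq_add i p hpi, expVec_self hσ, expVec_pred hσ hp, expVec_self_sub hk,
      expVec_pred_sub hp] at h
    · simpa using h
    · rintro j ⟨hji, hjp⟩
      rw [expVec_other (fun h => hjp (hinj j p i h hp)) hji]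
      simp
  · intro i u hp hu
    have h := h0 i u hu
    rw [Fintype.sum_eq_single i, expVec_self hσ, expVec_self_sub hk] at h
    · have hki := hk i
      exact (mul_eq_zero.mp h).resolve_left (by exact_mod_cast (by omega : k i ≠ 0))
    · intro j hji
      rw [expVec_other (hp j) hji]
      simp

/-- Infinite descent in `s`: by the case `s = 0` all values of a solution over `ℚ[s]` are
divisible by `s`, and the quotients are again a solution. -/
lemma Family.dvd (hk : ∀ j, 2 ≤ k j)
    (hq : ∀ i, 1 ≤ q i) (hdeg : ∀ j, q j * k j + (σ j).elim 0 q = d)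
    (hσ : ∀ j, σ j ≠ some j) (hinj : ∀ p p' i, σ p = some i → σ p' = some i → p = p')
    (hCY : ∑ i, q i = d) (hD : Fintype.card ι * d < D + 2 * ∑ i, q i) (m : ℕ)
    {b : (ι →₀ ℕ) → Polynomial ℚ} (hb : Family k σ q d D b) {v : ι →₀ ℕ} (hv : wt q v = D) :
    Polynomial.X ^ m ∣ b v := by
  induction m generalizing b v with
  | zero => simp
  | succ m ih =>
    have hX : ∀ w, wt q w = D → b w = Polynomial.X * (b w).divX := by
      intro w hw
      have h := (hb.kills hk hσ hinj).eq_zero hk hq hdeg hσ hinj hD hw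
      have h' := (b w).X_mul_divX_add
      rw [← Polynomial.coeff_zero_eq_eval_zero] at h
      rw [h, Polynomial.C_0, add_zero] at h'
      exact h'.symm
    have hfam : Family k σ q d D fun w => (b w).divX := by
      intro i u hu
      have hsub : ∀ e : ι →₀ ℕ, wt q e = d → 1 ≤ e i → wt q (u + (e - single i 1)) = D := by
        intro e he hei
        obtain ⟨e', rfl⟩ := exists_add_of_le (Finsupp.single_le_iff.mpr hei)
        rw [add_tsub_cancel_left, wt_add]
        rw [wt_add, wt_single] at he
        omega
      have h := hb i u hu
      rw [hX (u + (ones - single i 1)) (hsub _ (by simp [wt, ones, hCY]) (by simp [ones]))] at h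
      have hs : ∑ j, (expVec k σ j i : Polynomial ℚ) * b (u + (expVec k σ j - single i 1))
          = Polynomial.X * ∑ j, (expVec k σ j i : Polynomial ℚ)
            * (b (u + (expVec k σ j - single i 1))).divX := by
        rw [Finset.mul_sum]
        refine Finset.sum_congr rfl fun j _ => ?_
        by_cases hj : expVec k σ j i = 0
        · simp [hj]
        · conv_lhs => rw [hX _ (hsub _ (wt_expVec hdeg j) (Nat.one_le_iff_ne_zero.mpr hj))]
          ring
      rw [hs, ← mul_add] at h
      exact (mul_eq_zero.mp h).resolve_left Polynomial.X_ne_zero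
    rw [hX v hv, pow_succ']
    exact mul_dvd_mul_left _ (ih hfam hv)

lemma Family.eq_zero (hk : ∀ j, 2 ≤ k j)
    (hq : ∀ i, 1 ≤ q i) (hdeg : ∀ j, q j * k j + (σ j).elim 0 q = d)
    (hσ : ∀ j, σ j ≠ some j) (hinj : ∀ p p' i, σ p = some i → σ p' = some i → p = p')
    (hCY : ∑ i, q i = d) (hD : Fintype.card ι * d < D + 2 * ∑ i, q i)
    {b : (ι →₀ ℕ) → Polynomial ℚ} (hb : Family k σ q d D b) {v : ι →₀ ℕ} (hv : wt q v = D) :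
    b v = 0 := by
  by_contra hne
  have h := Polynomial.natDegree_le_of_dvd
    (Family.dvd hk hq hdeg hσ hinj hCY hD ((b v).natDegree + 1) hb hv) hne
  rw [Polynomial.natDegree_X_pow] at h
  omega

end Relations

/-! ### Duality for the Jacobian ideal -/

/-- For the one-parameter family `f = g + s·∏ xᵢ` attached to an invertible polynomial `g`
(a sum of chains and loops) satisfying the Calabi–Yau condition, the monomial
`(∏ xᵢ)^(n-1)` lies in the Jacobian ideal of `f`. -/
theorem prod_pow_mem_jacobian (n : ℕ) (hn : 2 ≤ n)
    (k : Fin n → ℕ) (hk : ∀ j, 2 ≤ k j)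
    (σ : Fin n → Option (Fin n)) (hσ : ∀ j, σ j ≠ some j)
    (hσinj : Set.InjOn σ {j | σ j ≠ none})
    (E : Matrix (Fin n) (Fin n) ℕ)
    (hE : ∀ i j, E i j = (if i = j then k j else 0) + (if σ j = some i then 1 else 0))
    (q : Fin n → ℕ) (hq : ∀ i, 1 ≤ q i) (d : ℕ) (hd : 1 ≤ d)
    (hdeg : ∀ j, ∑ i, q i * E i j = d)
    (hCY : ∑ i, q i = d)
    (f : MvPolynomial (Fin n) (RatFunc ℚ))
    (hf : f = (∑ j : Fin n, ∏ i : Fin n, X i ^ E i j)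
        + C RatFunc.X * ∏ i : Fin n, X i) :
    (∏ i : Fin n, X i : MvPolynomial (Fin n) (RatFunc ℚ)) ^ (n - 1)
      ∈ Ideal.span (Set.range fun i : Fin n => pderiv i f) := by
  classical
  have hσ2 : ∀ p p' i, σ p = some i → σ p' = some i → p = p' := by
    intro p p' i h h'
    exact hσinj (by simp [h]) (by simp [h']) (h.trans h'.symm)
  have hEv : ∀ i j, E i j = expVec k σ j i := by
    intro i j
    rw [hE, expVec, Finsupp.add_apply, Finsupp.single_apply]
    congr 1
    · simp only [eq_comm]
    · cases σ j with
      | none => simp [tailExp]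
      | some e => simp [tailExp, Finsupp.single_apply]
  have hdeg' : ∀ j, q j * k j + (σ j).elim 0 q = d := by
    intro j
    rw [← wt_single, ← wt_tail, ← wt_add, ← hdeg j]
    exact Finset.sum_congr rfl fun i _ => by rw [hEv]; rfl
  set D := (n - 1) * d with hDdef
  have hD : Fintype.card (Fin n) * d < D + 2 * ∑ i, q i := by
    rw [Fintype.card_fin, hCY, hDdef]
    obtain ⟨m, rfl⟩ : ∃ m, n = m + 1 := ⟨n - 1, by omega⟩
    rw [Nat.add_sub_cancel]
    nlinarith
  have hmon : ∀ v : Fin n →₀ ℕ, (∏ i, X i ^ v i : MvPolynomial (Fin n) (RatFunc ℚ))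
      = monomial v 1 := by
    intro v
    rw [monomial_eq, C_1, one_mul, Finsupp.prod_fintype _ _ (by simp)]
  have hone : (∏ i, X i : MvPolynomial (Fin n) (RatFunc ℚ)) = monomial ones 1 := by
    rw [← hmon]; simp [ones]
  have hf' : f = ∑ j, monomial (expVec k σ j) 1 + monomial ones RatFunc.X := by
    rw [hf, hone, C_mul_monomial, mul_one]
    congr 1
    refine Finset.sum_congr rfl fun j _ => ?_
    rw [← hmon]
    exact Finset.prod_congr rfl fun i _ => by rw [hEv]
  have hpd : ∀ i, pderiv i f = ∑ j, monomial (expVec k σ j - Finsupp.single i 1)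
      (expVec k σ j i : RatFunc ℚ) + monomial (ones - Finsupp.single i 1) RatFunc.X := by
    intro i
    rw [hf', map_add, map_sum, pderiv_monomial]
    simp only [pderiv_monomial, one_mul]
    simp [ones]
  rw [hone, monomial_pow, one_pow]
  by_contra hnot
  set J := Ideal.span (Set.range fun i : Fin n => pderiv i f)
  -- Linear duality over `ℚ(s)`: a functional on the polynomial ring that vanishes on `J`.
  obtain ⟨φ, hφ, hJ⟩ := Submodule.exists_le_ker_of_notMem
    (K := RatFunc ℚ) (p := J.restrictScalars (RatFunc ℚ)) (v := monomial ((n - 1) • ones) 1) hnot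
  let a : (Fin n →₀ ℕ) → RatFunc ℚ := fun v => φ (monomial v 1)
  have hφm : ∀ v c, φ (monomial v c) = c * a v := by
    intro v c
    have : monomial v c = c • monomial v (1 : RatFunc ℚ) := by
      rw [smul_monomial, smul_eq_mul, mul_one]
    rw [this, map_smul, smul_eq_mul]
  have hrel : ∀ i u, ∑ j, (expVec k σ j i : RatFunc ℚ)
      * a (u + (expVec k σ j - Finsupp.single i 1))
      + RatFunc.X * a (u + (ones - Finsupp.single i 1)) = 0 := by
    intro i u
    have hmem : monomial u 1 * pderiv i f ∈ J :=
      J.mul_mem_left _ (Ideal.subset_span ⟨i, rfl⟩)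
    have h : φ (monomial u 1 * pderiv i f) = 0 := hJ hmem
    rw [hpd, mul_add, Finset.mul_sum, map_add, map_sum] at h
    simpa only [monomial_mul, one_mul, hφm] using h
  -- Clearing denominators on the finitely many exponent vectors of degree `D`.
  have hfin := finite_wt (D := D) hq
  obtain ⟨c, hc⟩ := IsLocalization.exist_integer_multiples_of_finset
    (nonZeroDivisors (Polynomial ℚ)) (hfin.toFinset.image a)
  have hc' : ∀ v, ∃ b : Polynomial ℚ, wt q v = D →
      algebraMap (Polynomial ℚ) (RatFunc ℚ) b
        = algebraMap (Polynomial ℚ) (RatFunc ℚ) c * a v := by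
    intro v
    by_cases hv : wt q v = D
    · obtain ⟨b, hb⟩ := hc (a v) (Finset.mem_image_of_mem a (by simpa using hv))
      exact ⟨b, fun _ => by rw [hb, Algebra.smul_def]⟩
    · exact ⟨0, fun h => absurd h hv⟩
  choose b hb using hc'
  have hfam : Family k σ q d D b := by
    intro i u hu
    have hsub : ∀ e : Fin n →₀ ℕ, wt q e = d → 1 ≤ e i →
        wt q (u + (e - Finsupp.single i 1)) = D := by
      intro e he hei
      obtain ⟨e', rfl⟩ := exists_add_of_le (Finsupp.single_le_iff.mpr hei)
      rw [add_tsub_cancel_left, wt_add]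
      rw [wt_add, wt_single] at he
      omega
    apply RatFunc.algebraMap_injective ℚ
    rw [map_zero, map_add, map_sum, map_mul, RatFunc.algebraMap_X,
      hb _ (hsub ones (by simp [wt, ones, hCY]) (by simp [ones]))]
    have hs : ∀ j, algebraMap (Polynomial ℚ) (RatFunc ℚ)
        ((expVec k σ j i : Polynomial ℚ) * b (u + (expVec k σ j - Finsupp.single i 1)))
        = algebraMap (Polynomial ℚ) (RatFunc ℚ) c * ((expVec k σ j i : RatFunc ℚ)
          * a (u + (expVec k σ j - Finsupp.single i 1))) := by
      intro j
      by_cases hj : expVec k σ j i = 0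
      · simp [hj]
      · rw [map_mul, map_natCast,
          hb _ (hsub _ (wt_expVec hdeg' j) (Nat.one_le_iff_ne_zero.mpr hj))]
        ring
    rw [Finset.sum_congr rfl fun j _ => hs j, ← Finset.mul_sum, mul_left_comm, ← mul_add,
      hrel, mul_zero]
  have hw : wt q ((n - 1) • ones) = D := by
    simp [wt, ones, ← Finset.sum_mul, hCY, hDdef, mul_comm]
  have h0 := hb _ hw
  rw [Family.eq_zero hk hq hdeg' hσ hσ2 hCY hD hfam hw, map_zero] at h0
  refine hφ ((mul_eq_zero.mp h0.symm).resolve_left ?_)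
  rw [map_eq_zero_iff _ (RatFunc.algebraMap_injective ℚ)]
  exact nonZeroDivisors.coe_ne_zero c
end

section
/- Let n ≥ 2 and let q̂ : Fin n → ℕ with q̂_i ≥ 1 for all i, and set d̂ := ∑_i q̂_i. Then the set V := {b ∈ ℕ : 1 ≤ b ≤ d̂ and for all i, d̂ does not divide b·q̂_i} has cardinality at least n − 1. -/
/-!
Every `b` in `[1, d)` outside `V` is an integral multiple of some `d / q_i`, and `d / q_i` has only
`q_i - 1` positive multiples below `d` (`card_dvd_mul_le`). By the union bound at most
`∑ (q_i - 1) = d - n` of the `d - 1` elements of `[1, d)` are excluded, so at least `n - 1` remain.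
-/

/-- For `q ≥ 1`, the map `b ↦ b * q / d` is injective from the `b` in `[1, d)` with `d ∣ b * q`
to `[1, q)`. These `b` are the integral multiples of `d / q`, other than `d` itself. -/
lemma card_dvd_mul_le (d q : ℕ) (hq : 1 ≤ q) :
    ((Finset.Ico 1 d).filter fun b => d ∣ b * q).card ≤ q - 1 := by
  rw [← Nat.card_Ico 1 q]
  refine Finset.card_le_card_of_injOn (fun b => b * q / d) ?_ ?_
  · intro b hb
    simp only [Finset.coe_filter, Finset.mem_Ico, Set.mem_ofPred_eq] at hb
    obtain ⟨⟨h1, h2⟩, h3⟩ := hb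
    have hd : 0 < d := by omega
    simp only [Finset.coe_Ico, Set.mem_Ico]
    refine ⟨Nat.div_pos (Nat.le_of_dvd (by positivity) h3) hd, ?_⟩
    rw [Nat.div_lt_iff_lt_mul hd, mul_comm q d]
    exact Nat.mul_lt_mul_of_pos_right h2 hq
  · intro a ha b hb hab
    simp only [Finset.coe_filter, Set.mem_ofPred_eq] at ha hb
    exact Nat.eq_of_mul_eq_mul_right hq ((Nat.div_left_inj ha.2 hb.2).mp hab)

/-- The order `u = v = |V|` of the Picard–Fuchs equation is at least `n - 1`. -/
theorem card_V_ge_n_sub_one (n : ℕ) (hn : 2 ≤ n) (qhat : Fin n → ℕ) (hq : ∀ i, 1 ≤ qhat i)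
    (dhat : ℕ) (hd : dhat = ∑ i, qhat i) :
    n - 1 ≤
      ((Finset.Icc 1 dhat).filter fun b => ∀ i, ¬ dhat ∣ b * qhat i).card := by
  -- `dhat` belongs to every `Q_i`; removing it first is what makes the plain union bound sharp enough.
  set U := Finset.univ.biUnion fun i => (Finset.Ico 1 dhat).filter fun b => dhat ∣ b * qhat i
    with hU
  have hUcard : U.card ≤ ∑ i, (qhat i - 1) :=
    Finset.card_biUnion_le.trans (Finset.sum_le_sum fun i _ => card_dvd_mul_le _ _ (hq i))
  have hsum : ∑ i, (qhat i - 1) + n = dhat := by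
    have h : ∑ i, (qhat i - 1 + 1) = ∑ i, qhat i :=
      Finset.sum_congr rfl fun i _ => Nat.sub_add_cancel (hq i)
    rw [Finset.sum_add_distrib] at h
    simpa [hd] using h
  have hsub : Finset.Ico 1 dhat \ U ⊆
      (Finset.Icc 1 dhat).filter fun b => ∀ i, ¬ dhat ∣ b * qhat i := by
    intro b hb
    simp only [hU, Finset.mem_sdiff, Finset.mem_biUnion, Finset.mem_univ, true_and,
      Finset.mem_filter, not_exists, not_and] at hb
    have hb1 := Finset.mem_Ico.mp hb.1
    exact Finset.mem_filter.mpr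
      ⟨Finset.mem_Icc.mpr ⟨hb1.1, hb1.2.le⟩, fun i => hb.2 i hb.1⟩
  have h1 := Finset.card_le_card hsub
  have h2 := Finset.le_card_sdiff U (Finset.Ico 1 dhat)
  rw [Nat.card_Ico] at h2
  omega
end

section
/- Let m ≥ 2, let q̂, k : ZMod m → ℕ with q̂_j ≥ 1 for all j, and let d̂ ∈ ℕ be such that for every j ∈ ZMod m, q̂_j·k_j + q̂_{j−1} = d̂ (the cyclic relations satisfied by the dual weights of a loop, indices mod m). If q ∈ ℕ and i ∈ ZMod m are such that d̂ divides q·q̂_i, then d̂ divides q·q̂_j for every j ∈ ZMod m. -/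
/-!
Multiplying the cyclic relation at `j` by `q` shows that `d̂ ∣ q·q̂ⱼ` implies `d̂ ∣ q·q̂ⱼ₋₁`.
Since `-1` generates `ZMod m`, repeating this step carries the divisibility from `i` all the
way around the loop.
-/

/-- For a loop, if `d̂ ∣ q·q̂ᵢ` for one index of the loop, then `d̂ ∣ q·q̂ⱼ` for all
indices of the loop. -/
theorem loop_dvd_propagates (m : ℕ) (hm : 2 ≤ m) (qhat k : ZMod m → ℕ)
    (hq : ∀ j, 1 ≤ qhat j) (dhat : ℕ)
    (hrel : ∀ j : ZMod m, qhat j * k j + qhat (j - 1) = dhat)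
    (q : ℕ) (i : ZMod m) (hdvd : dhat ∣ q * qhat i) :
    ∀ j : ZMod m, dhat ∣ q * qhat j := by
  have step : ∀ j : ZMod m, dhat ∣ q * qhat j → dhat ∣ q * qhat (j - 1) := by
    intro j hj
    have hsum : dhat ∣ q * qhat j * k j + q * qhat (j - 1) :=
      ⟨q, by rw [mul_assoc, ← mul_add, hrel j, mul_comm]⟩
    exact (Nat.dvd_add_right (hj.mul_right (k j))).mp hsum
  have iter : ∀ n : ℕ, dhat ∣ q * qhat (i - n) := by
    intro n
    induction n with
    | zero => simpa using hdvd
    | succ n ih =>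
      have h := step _ ih
      rwa [sub_sub, ← Nat.cast_succ] at h
  intro j
  have : NeZero m := ⟨by omega⟩
  have h := iter (i - j).val
  rwa [ZMod.natCast_zmod_val, sub_sub_cancel] at h
end

section
/- Let m ≥ 2, let q̂, k : ZMod m → ℕ with q̂_j ≥ 1 and k_j ≥ 1 for all j, and let d̂ ∈ ℕ be such that for every j ∈ ZMod m, q̂_j·k_j + q̂_{j−1} = d̂ (the cyclic relations satisfied by the dual weights of a loop, indices mod m). Let i ∈ ZMod m and let c, c' ∈ ℕ with 1 ≤ c ≤ q̂_i and 1 ≤ c' ≤ q̂_{i+1}, and suppose that the floor divisions agree: ⌊c·d̂/q̂_i⌋ = ⌊c'·d̂/q̂_{i+1}⌋. Then q̂_i divides c·d̂ exactly, and setting q := c·d̂/q̂_i, one has that d̂ divides q·q̂_j for every j ∈ ZMod m. -/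
/-!
Write `c d̂ = q q̂ᵢ + r` and `c' d̂ = q q̂ᵢ₊₁ + s` by Euclidean division, with the common quotient `q`.
Adding the first equation to `kᵢ₊₁` times the second and using `q̂ᵢ₊₁ kᵢ₊₁ + q̂ᵢ = d̂` shows that
`d̂` divides `r + kᵢ₊₁ s`; but `r + kᵢ₊₁ s < q̂ᵢ + kᵢ₊₁ q̂ᵢ₊₁ = d̂`, so `r = 0`. Hence `d̂ ∣ q q̂ᵢ`,
and the relation `q̂ⱼ₋₁ = d̂ - q̂ⱼ kⱼ` carries this divisibility from `j` to `j - 1`,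
hence around the whole loop.
-/

/-- For a loop, if two neighbouring indices have elements of `Qᵢ`, `Qᵢ₊₁` with the same
floor, then both are integers and the common value lies in `Qⱼ^ℤ` for all indices of the
loop. -/
theorem loop_floor_eq_integral (m : ℕ) (hm : 2 ≤ m) (qhat k : ZMod m → ℕ)
    (hq : ∀ j, 1 ≤ qhat j) (hk : ∀ j, 1 ≤ k j) (dhat : ℕ)
    (hrel : ∀ j : ZMod m, qhat j * k j + qhat (j - 1) = dhat)
    (i : ZMod m) (c c' : ℕ)
    (hc : 1 ≤ c) (hcq : c ≤ qhat i) (hc' : 1 ≤ c') (hc'q : c' ≤ qhat (i + 1))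
    (hfloor : c * dhat / qhat i = c' * dhat / qhat (i + 1)) :
    qhat i ∣ c * dhat ∧ ∀ j : ZMod m, dhat ∣ (c * dhat / qhat i) * qhat j := by
  have : NeZero m := ⟨by omega⟩
  have hr := Nat.mod_lt (c * dhat) (hq i)
  have hs := Nat.mod_lt (c' * dhat) (hq (i + 1))
  have e1 := Nat.div_add_mod (c * dhat) (qhat i)
  have e2 := Nat.div_add_mod (c' * dhat) (qhat (i + 1))
  have h := hrel (i + 1)
  rw [add_sub_cancel_right] at h
  rw [← hfloor] at e2
  set q := c * dhat / qhat i
  set r := c * dhat % qhat i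
  set s := c' * dhat % qhat (i + 1)
  have hdvd : dhat ∣ r + k (i + 1) * s := by
    have hsum : dhat * q + (r + k (i + 1) * s) = dhat * (c + k (i + 1) * c') := by
      linear_combination e1 + k (i + 1) * e2 - q * h
    exact (Nat.dvd_add_right (dvd_mul_right dhat q)).1 (hsum ▸ dvd_mul_right _ _)
  have hlt : r + k (i + 1) * s < dhat := by nlinarith [hk (i + 1)]
  have hr0 : r = 0 := by
    have := Nat.eq_zero_of_dvd_of_lt hdvd hlt
    omega
  refine ⟨Nat.dvd_of_mod_eq_zero hr0, ?_⟩
  have step (n : ℕ) : dhat ∣ q * qhat (i - n) := by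
    induction n with
    | zero => exact ⟨c, by simp only [Nat.cast_zero, sub_zero]; linarith⟩
    | succ n ih =>
      have hn := hrel (i - n)
      rw [sub_sub, ← Nat.cast_succ] at hn
      refine (Nat.dvd_add_right (ih.mul_right (k (i - n)))).1 ⟨q, ?_⟩
      linear_combination q * hn
  intro j
  simpa using step (i - j).val
end

section
/- Let m ≥ 1, let q̂, k : Fin m → ℕ with q̂_j ≥ 1 for all j, and let d̂ ∈ ℕ be such that q̂_1·k_1 = d̂ and q̂_j·k_j + q̂_{j−1} = d̂ for every j with 2 ≤ j ≤ m (the relations satisfied by the dual weights of a chain). If q ∈ ℕ and i ∈ {1,…,m} are such that d̂ divides q·q̂_i, then d̂ divides q·q̂_j for every j with 1 ≤ j ≤ i. -/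
/-- For a chain, if `d̂ ∣ q·q̂ᵢ` at some index `i` of the chain, then `d̂ ∣ q·q̂ⱼ` for all
earlier indices `j ≤ i` of the chain. -/
theorem chain_dvd_propagates (m : ℕ) (hm : 1 ≤ m) (qhat k : ℕ → ℕ)
    (hq : ∀ j, 1 ≤ j → j ≤ m → 1 ≤ qhat j) (dhat : ℕ)
    (h1 : qhat 1 * k 1 = dhat)
    (hrel : ∀ j, 2 ≤ j → j ≤ m → qhat j * k j + qhat (j - 1) = dhat)
    (q i : ℕ) (hi1 : 1 ≤ i) (him : i ≤ m)
    (hdvd : dhat ∣ q * qhat i) :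
    ∀ j, 1 ≤ j → j ≤ i → dhat ∣ q * qhat j := by
  intro j hj hji
  -- Downward induction: `q * qhat (n - 1) = q * dhat - (q * qhat n) * k n`.
  induction hji using Nat.decreasingInduction with
  | self => exact hdvd
  | of_succ n hn ih =>
    have h := hrel (n + 1) (by omega) (by omega)
    rw [Nat.add_sub_cancel] at h
    have hsum : q * qhat (n + 1) * k (n + 1) + q * qhat n = q * dhat := by
      rw [← h]; ring
    refine (Nat.dvd_add_right ((ih (by omega)).mul_right (k (n + 1)))).mp ?_
    rw [hsum]
    exact Dvd.intro_left q rfl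
end

section
/- Let m ≥ 2, let q̂, k : Fin m → ℕ with q̂_j ≥ 1 and k_j ≥ 1 for all j, and let d̂ ∈ ℕ be such that q̂_1·k_1 = d̂ and q̂_j·k_j + q̂_{j−1} = d̂ for every j with 2 ≤ j ≤ m (the relations satisfied by the dual weights of a chain). Let i be an index with 1 ≤ i ≤ m−1, and let c, c' ∈ ℕ with 1 ≤ c ≤ q̂_i and 1 ≤ c' ≤ q̂_{i+1}, and suppose the floor divisions agree: ⌊c·d̂/q̂_i⌋ = ⌊c'·d̂/q̂_{i+1}⌋. Then q̂_i divides c·d̂ exactly, and setting q := c·d̂/q̂_i, one has that d̂ divides q·q̂_j for every j with 1 ≤ j ≤ i. -/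
/-!
Put `a = qhat i`, `b = qhat (i + 1)`, `K = k (i + 1)`, so that `b * K + a = dhat`, and let `q` be
the common floor, with remainders `c * dhat = a * q + r` (`r < a`) and `c' * dhat = b * q + s`
(`s < b`). Adding the first equation to `K` times the second gives
`(c + K * c') * dhat = q * dhat + (r + K * s)`, so `dhat ∣ r + K * s`. But
`r + K * s < a + K * b = dhat`, hence `r = 0`: thus `a ∣ c * dhat` and `dhat ∣ q * qhat i`.
Divisibility of `q * qhat j` by `dhat` then descends along the chain, because
`qhat (j - 1) ≡ -qhat j * k j` modulo `dhat`.
-/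


/-- For a chain, if consecutive indices `i`, `i+1` carry elements of `Qᵢ`, `Qᵢ₊₁` with the
same floor, then the element at `i` is an integer `q` and `q ∈ Qⱼ^ℤ` for all `j ≤ i`. -/
theorem chain_floor_eq_integral (m : ℕ) (hm : 2 ≤ m) (qhat k : ℕ → ℕ)
    (hq : ∀ j, 1 ≤ j → j ≤ m → 1 ≤ qhat j)
    (hk : ∀ j, 1 ≤ j → j ≤ m → 1 ≤ k j) (dhat : ℕ)
    (h1 : qhat 1 * k 1 = dhat)
    (hrel : ∀ j, 2 ≤ j → j ≤ m → qhat j * k j + qhat (j - 1) = dhat)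
    (i : ℕ) (hi1 : 1 ≤ i) (him : i ≤ m - 1)
    (c c' : ℕ) (hc : 1 ≤ c) (hcq : c ≤ qhat i) (hc' : 1 ≤ c') (hc'q : c' ≤ qhat (i + 1))
    (hfloor : c * dhat / qhat i = c' * dhat / qhat (i + 1)) :
    qhat i ∣ c * dhat ∧ ∀ j, 1 ≤ j → j ≤ i → dhat ∣ (c * dhat / qhat i) * qhat j := by
  have hb : 1 ≤ qhat (i + 1) := hq _ (by omega) (by omega)
  have ha : 1 ≤ qhat i := hq _ hi1 (by omega)
  have hr := hrel (i + 1) (by omega) (by omega)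
  rw [Nat.add_sub_cancel] at hr
  have e1 := Nat.div_add_mod (c * dhat) (qhat i)
  have e2 := Nat.div_add_mod (c' * dhat) (qhat (i + 1))
  have l1 := Nat.mod_lt (c * dhat) ha
  have l2 := Nat.mod_lt (c' * dhat) hb
  rw [← hfloor] at e2
  have hdvd : qhat i ∣ c * dhat := by
    apply Nat.dvd_of_mod_eq_zero
    generalize c * dhat % qhat i = r at *
    generalize c' * dhat % qhat (i + 1) = s at *
    generalize c * dhat / qhat i = q at *
    have hsum : q * dhat + (r + k (i + 1) * s) = (c + k (i + 1) * c') * dhat := by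
      calc q * dhat + (r + k (i + 1) * s)
          = (qhat i * q + r) + k (i + 1) * (qhat (i + 1) * q + s) := by rw [← hr]; ring
        _ = (c + k (i + 1) * c') * dhat := by rw [e1, e2]; ring
    have hd : dhat ∣ r + k (i + 1) * s :=
      (Nat.dvd_add_right (Dvd.intro_left q rfl)).mp (hsum ▸ Dvd.intro_left _ rfl)
    have hlt : r + k (i + 1) * s < dhat := by
      have := Nat.mul_le_mul_left (k (i + 1)) l2.le
      rw [← hr, Nat.mul_comm (qhat (i + 1))]
      omega
    have := Nat.eq_zero_of_dvd_of_lt hd hlt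
    omega
  refine ⟨hdvd, fun j hj hji => ?_⟩
  induction hji using Nat.decreasingInduction with
  | self => rw [Nat.div_mul_cancel hdvd]; exact Dvd.intro_left c rfl
  | of_succ n hn ih =>
    have hrn := hrel (n + 1) (by omega) (by omega)
    rw [Nat.add_sub_cancel] at hrn
    refine (Nat.dvd_add_right ((ih (by omega)).mul_right (k (n + 1)))).mp ?_
    rw [Nat.mul_assoc, ← Nat.mul_add, hrn]
    exact Dvd.intro_left _ rfl
end

section
/- Let n ≥ 1, let q : Fin n → ℕ with q_i ≥ 1 for all i, set d := ∑_i q_i (the Calabi–Yau condition), and let k : Fin n → ℕ with k_i ≥ 1 for all i. Let M be a subset of Fin n and let π : Fin n → Fin n be injective on M, such that: (1) for every m ∈ M, q_m + q_{π(m)}·k_{π(m)} = d; (2) for every index i not lying in the image π(M), q_i·k_i = d. Then for every α : Fin n → ℕ with α_m = k_m for all m ∈ M and α_i ≤ k_i − 1 for all i ∉ M, one has ∑_i q_i·α_i ≤ d·(n−1), with equality if and only if α_i = k_i − 1 for every i ∉ M. -/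
/-!
The exponents `α` are bounded pointwise by `β`, where `βᵢ = kᵢ` on `M` and `βᵢ = kᵢ - 1` off `M`.
Since all weights are positive, everything follows once `∑ qᵢ βᵢ = d (n - 1)`. Adding `d = ∑ qᵢ` to
the left side gives `∑ᵢ qᵢ kᵢ + ∑_{m ∈ M} q_m`. Injectivity of `π` on `M` lets each `q_m` be
paired with the term of index `π m`, so that this sum splits into `n` groups, one for each index
in `π(M)` or its complement, each equal to `d` by the chain/loop relations (`sum_add_sum_eq_mul`).
-/

/-- Pairing each `q m`, `m ∈ M`, with the term `q (π m) * k (π m)` splits the sum into `n` groups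
of value `d`. -/
theorem sum_add_sum_eq_mul {n d : ℕ} (q k : Fin n → ℕ) (M : Finset (Fin n))
    (π : Fin n → Fin n) (hπ : Set.InjOn π M)
    (h1 : ∀ m ∈ M, q m + q (π m) * k (π m) = d)
    (h2 : ∀ i, i ∉ M.image π → q i * k i = d) :
    ∑ i, q i * k i + ∑ m ∈ M, q m = d * n := by
  have hpair : ∑ m ∈ M, q m + ∑ i ∈ M.image π, q i * k i = (M.image π).card * d := by
    rw [Finset.sum_image hπ, ← Finset.sum_add_distrib, Finset.sum_congr rfl h1,
      Finset.card_image_of_injOn hπ, Finset.sum_const, smul_eq_mul]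
  have hcompl : ∑ i ∈ (M.image π)ᶜ, q i * k i = (M.image π)ᶜ.card * d := by
    rw [Finset.sum_congr rfl fun i hi => h2 i (Finset.mem_compl.mp hi), Finset.sum_const,
      smul_eq_mul]
  have hcard : (M.image π).card + (M.image π)ᶜ.card = n := by
    rw [Finset.card_add_card_compl, Fintype.card_fin]
  rw [← Finset.sum_add_sum_compl (M.image π) fun i => q i * k i]
  calc _ = (M.image π).card * d + (M.image π)ᶜ.card * d := by omega
    _ = d * n := by rw [← add_mul, hcard, mul_comm]


/-- With one exception, every monomial `∏ xᵢ^(αᵢ)` with `α_m = k_m` for `m ∈ M` and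
`αᵢ < kᵢ` otherwise has weighted degree at most `d(n-1)`, with equality exactly for
`∏_{m∈M} x_m^{k_m}·∏_{i∉M} xᵢ^{kᵢ-1}`. -/
theorem weighted_degree_le (n : ℕ) (hn : 1 ≤ n) (q : Fin n → ℕ) (hq : ∀ i, 1 ≤ q i)
    (d : ℕ) (hd : d = ∑ i, q i)
    (k : Fin n → ℕ) (hk : ∀ i, 1 ≤ k i)
    (M : Set (Fin n)) (π : Fin n → Fin n) (hπ : Set.InjOn π M)
    (h1 : ∀ m ∈ M, q m + q (π m) * k (π m) = d)
    (h2 : ∀ i, i ∉ π '' M → q i * k i = d)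
    (α : Fin n → ℕ) (hαM : ∀ m ∈ M, α m = k m) (hαc : ∀ i ∉ M, α i ≤ k i - 1) :
    ∑ i, q i * α i ≤ d * (n - 1) ∧
      (∑ i, q i * α i = d * (n - 1) ↔ ∀ i ∉ M, α i = k i - 1) := by
  classical
  let β : Fin n → ℕ := fun i => if i ∈ M then k i else k i - 1
  have hβ : ∑ i, q i * β i = d * (n - 1) := by
    have hsum := sum_add_sum_eq_mul q k M.toFinset π (by simpa using hπ) (by simpa using h1)
      (fun i hi => h2 i (by simpa using hi))
    have hadd : ∑ i, q i * β i + ∑ i, q i = ∑ i, q i * k i + ∑ m ∈ M.toFinset, q m := by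
      have hM : M.toFinset = Finset.univ.filter (· ∈ M) := by ext; simp
      rw [hM, Finset.sum_filter, ← Finset.sum_add_distrib, ← Finset.sum_add_distrib]
      refine Finset.sum_congr rfl fun i _ => ?_
      by_cases hi : i ∈ M
      · simp [β, hi]
      · simp only [β, hi, if_false, add_zero]
        rw [← Nat.mul_succ, Nat.succ_eq_add_one, Nat.sub_add_cancel (hk i)]
    rw [hsum, ← hd] at hadd
    rw [Nat.mul_sub_one]
    omega
  have hle : ∀ i ∈ Finset.univ, q i * α i ≤ q i * β i := fun i _ => by
    refine Nat.mul_le_mul_left _ ?_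
    by_cases hi : i ∈ M
    · simp [β, hi, hαM i hi]
    · simpa [β, hi] using hαc i hi
  refine ⟨hβ ▸ Finset.sum_le_sum hle, ?_⟩
  rw [← hβ, Finset.sum_eq_sum_iff_of_le hle]
  constructor
  · intro h i hi
    simpa [β, hi] using Nat.eq_of_mul_eq_mul_left (hq i) (h i (Finset.mem_univ i))
  · intro h i _
    by_cases hi : i ∈ M
    · simp [β, hi, hαM i hi]
    · simp [β, hi, h i hi]
end

section
/- Let n ≥ 1 and let e_1,…,e_n ∈ ℕ^n be vectors such that the n×n matrix with rows e_1,…,e_n is invertible over ℚ. Let q̂ : Fin n → ℕ be positive integers with gcd(q̂_1,…,q̂_n) = 1 and let d̂ ∈ ℕ satisfy ∑_i q̂_i·e_i = (d̂, d̂, …, d̂) componentwise. Then every integer relation among e_1,…,e_n and (1,1,…,1) is an integer multiple of (q̂_1,…,q̂_n,−d̂): for all l : Fin n → ℤ and t ∈ ℤ with ∑_i l_i·e_i + t·(1,…,1) = 0 (componentwise), there exists m ∈ ℤ with l_i = m·q̂_i for all i and t = −m·d̂. -/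
/-! Since the exponent matrix is invertible, the `e i` admit no nontrivial integer relation; in
particular `dhat ≠ 0`. Adding `dhat` times a given relation `(l, t)` to `t` times the relation
`(qhat, -dhat)` cancels the vector `(1,…,1)`, so `dhat * l i = -t * qhat i` for all `i`. Hence
`dhat` divides every `t * qhat i`, and therefore `t`, because the `qhat i` have gcd `1`; the
multiplier is `m = -t / dhat`. -/

/-- The lattice of integer relations among the exponent vectors `e₁,…,eₙ` and `(1,…,1)`
is generated by `(q̂₁,…,q̂ₙ,−d̂)`. -/
theorem gkz_lattice_relations (n : ℕ) (hn : 1 ≤ n) (e : Fin n → Fin n → ℕ)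
    (hE : IsUnit (Matrix.of fun i j => (e i j : ℚ)).det)
    (qhat : Fin n → ℕ) (hq : ∀ i, 1 ≤ qhat i)
    (hgcd : Finset.univ.gcd qhat = 1)
    (dhat : ℕ) (hrel : ∀ j, ∑ i, qhat i * e i j = dhat) :
    ∀ (l : Fin n → ℤ) (t : ℤ),
      (∀ j, ∑ i, l i * (e i j : ℤ) + t = 0) →
      ∃ m : ℤ, (∀ i, l i = m * qhat i) ∧ t = -m * dhat := by
  intro l t hl
  have hind : ∀ v : Fin n → ℤ, (∀ j, ∑ i, v i * (e i j : ℤ) = 0) → ∀ i, v i = 0 := by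
    intro v hv i
    have h := Matrix.eq_zero_of_vecMul_eq_zero hE.ne_zero (v := fun i => (v i : ℚ)) (by
      funext j
      simp only [Matrix.vecMul, dotProduct, Matrix.of_apply, Pi.zero_apply]
      exact_mod_cast hv j)
    exact Int.cast_eq_zero.mp (congrFun h i)
  have hrelZ : ∀ j, ∑ i, (qhat i : ℤ) * (e i j : ℤ) = dhat := fun j => by
    exact_mod_cast hrel j
  have hd : (dhat : ℤ) ≠ 0 := by
    intro h0
    have h := hind (fun i => (qhat i : ℤ)) (fun j => (hrelZ j).trans h0) ⟨0, hn⟩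
    have := hq ⟨0, hn⟩
    omega
  -- Eliminating `(1,…,1)` between the two relations leaves one among the `e i` alone.
  have hprop : ∀ i, (dhat : ℤ) * l i + t * qhat i = 0 := by
    refine hind (fun i => (dhat : ℤ) * l i + t * qhat i) fun j => ?_
    simp only [add_mul, mul_assoc, Finset.sum_add_distrib, ← Finset.mul_sum]
    rw [hrelZ j]
    linear_combination (dhat : ℤ) * hl j
  have hdvd : (dhat : ℤ) ∣ t := by
    have h : dhat ∣ Finset.univ.gcd fun i => t.natAbs * qhat i := by
      refine Finset.dvd_gcd fun i _ => ?_
      have h1 : (dhat : ℤ) ∣ t * qhat i := ⟨-l i, by linear_combination hprop i⟩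
      simpa [Int.natAbs_mul] using Int.natAbs_dvd_natAbs.mpr h1
    rw [Finset.gcd_mul_left, hgcd] at h
    exact Int.natCast_dvd.mpr (by simpa using h)
  obtain ⟨k, rfl⟩ := hdvd
  refine ⟨-k, fun i => mul_left_cancel₀ hd ?_, by ring⟩
  linear_combination hprop i
end

section
/- Let n ≥ 2 and let q̂ : Fin n → ℕ with q̂_i ≥ 1 for all i, and set d̂ := ∑_i q̂_i. Let A be the multiset of rational numbers A := ⨆_{i=1}^n { j·d̂/q̂_i : j = 0,1,…,q̂_i−1 } (disjoint union over i, counted with multiplicity, d̂ elements in total), let D₀ be the multiset {0,1,…,d̂−1} of d̂ distinct integers (as rationals), and set αs := A − (A ∩ D₀) and βs := D₀ − (A ∩ D₀) (multiset intersection and difference). For an integer b belonging to βs, define p(b) := (the number of elements of αs, with multiplicity, that are < b) − (the number of elements of βs that are < b), an integer. Then for every b ∈ βs, the integer d̂ − b also belongs to βs, and p(b) + p(d̂ − b) = n. -/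
/-!
Removing the common part `A ∩ D₀` from both multisets does not change the difference of the
counting functions, so `p(b)` is the number of elements of `A` below `b` minus the number of
elements of `D₀` below `b`, and the latter is `b` itself. Moreover `b` is a `β` exactly when it
lies in `D₀` but not in `A`; since `0 ∈ A`, this forces `0 < b < d̂`, and `d̂ ∤ b q̂ᵢ` for all `i`.
The `i`-th block of `A` has `⌊b q̂ᵢ / d̂⌋ + 1` elements below `b` and
`⌊(d̂ - b) q̂ᵢ / d̂⌋ + 1` elements below `d̂ - b`. As `b q̂ᵢ / d̂` is not an integer, the two floors add
up to `q̂ᵢ - 1`, so the block contributes `q̂ᵢ + 1`. Summing over `i` gives `d̂ + n`, and subtracting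
`b + (d̂ - b) = d̂` leaves `n`.
-/

theorem card_filter_mul_lt {q d m x : ℕ} (h1 : x * d < m) (h2 : m < (x + 1) * d) (hx : x < q) :
    ((Multiset.range q).filter fun j => j * d < m).card = x + 1 := by
  have : ((Finset.range q).filter fun j => j * d < m) = Finset.range (x + 1) := by
    ext j
    simp only [Finset.mem_filter, Finset.mem_range]
    constructor
    · rintro ⟨-, h⟩
      exact lt_of_mul_lt_mul_right (h.trans h2) (Nat.zero_le d)
    · intro h
      exact ⟨by omega, (Nat.mul_le_mul_right d (by omega : j ≤ x)).trans_lt h1⟩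
  have h := congrArg Finset.card this
  rw [Finset.card_range] at h
  exact h

/-- The contribution of one block of `A` to `p(b) + p(d̂ - b)`, in terms of numerators. -/
theorem card_filter_add_card_filter {q d b : ℕ} (hb : 0 < b) (hbd : b < d)
    (hne : ∀ j < q, j * d ≠ b * q) (hq : 1 ≤ q) :
    ((Multiset.range q).filter fun j => j * d < b * q).card +
      ((Multiset.range q).filter fun j => j * d < (d - b) * q).card = q + 1 := by
  have hd : 0 < d := by omega
  obtain ⟨c, rfl⟩ := Nat.exists_eq_add_of_lt hbd
  have hxq : b * q / (b + c + 1) < q := by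
    rw [Nat.div_lt_iff_lt_mul hd]
    nlinarith
  set x := b * q / (b + c + 1) with hx
  have h1 : x * (b + c + 1) < b * q :=
    lt_of_le_of_ne (Nat.div_mul_le_self _ _) (hne x hxq)
  have h2 : b * q < (x + 1) * (b + c + 1) := by
    rw [hx]
    exact Nat.lt_mul_of_div_lt (Nat.lt_succ_self _) hd
  rw [card_filter_mul_lt h1 h2 hxq]
  clear_value x
  obtain ⟨y, rfl⟩ := Nat.exists_eq_add_of_lt hxq
  have e : b + c + 1 - b = c + 1 := by omega
  rw [e, card_filter_mul_lt (x := y) (by nlinarith) (by nlinarith) (by omega)]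
  omega

theorem card_filter_sub_inter {α : Type*} [DecidableEq α] (A D : Multiset α) (P : α → Prop)
    [DecidablePred P] :
    (((A - A ∩ D).filter P).card : ℤ) - (((D - A ∩ D).filter P).card : ℤ)
      = ((A.filter P).card : ℤ) - ((D.filter P).card : ℤ) := by
  have hA : ((A - A ∩ D).filter P).card + ((A ∩ D).filter P).card = (A.filter P).card := by
    rw [← Multiset.card_add, ← Multiset.filter_add, tsub_add_cancel_of_le Multiset.inter_le_left]
  have hD : ((D - A ∩ D).filter P).card + ((A ∩ D).filter P).card = (D.filter P).card := by
    rw [← Multiset.card_add, ← Multiset.filter_add, tsub_add_cancel_of_le Multiset.inter_le_right]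
  omega

theorem mem_sub_inter_iff {α : Type*} [DecidableEq α] {A D : Multiset α} (hD : D.Nodup) (x : α) :
    x ∈ D - A ∩ D ↔ x ∈ D ∧ x ∉ A := by
  have h := Multiset.nodup_iff_count_le_one.1 hD x
  rw [← Multiset.count_pos, ← Multiset.count_pos, ← Multiset.count_pos, Multiset.count_sub,
    Multiset.count_inter]
  omega

theorem card_filter_lt_range {d b : ℕ} (h : b ≤ d) :
    (((Multiset.range d).map fun k : ℕ => (k : ℚ)).filter fun x => x < (b : ℚ)).card = b := by
  rw [Multiset.filter_map, Multiset.card_map]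
  have : ((Finset.range d).filter fun k : ℕ => (k : ℚ) < b) = Finset.range b := by
    ext j
    simp only [Finset.mem_filter, Finset.mem_range, Nat.cast_lt]
    omega
  have h := congrArg Finset.card this
  rw [Finset.card_range] at h
  exact h

theorem card_filter_lt_bind {n d : ℕ} (q : Fin n → ℕ) (hq : ∀ i, 1 ≤ q i) (b : ℕ) :
    (((Finset.univ : Finset (Fin n)).val.bind fun i =>
        (Multiset.range (q i)).map fun j : ℕ => (j : ℚ) * d / q i).filter fun x => x < (b : ℚ)).card
      = ∑ i, ((Multiset.range (q i)).filter fun j => j * d < b * q i).card := by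
  rw [Multiset.filter_bind, Multiset.card_bind]
  refine congrArg Multiset.sum (Multiset.map_congr rfl fun i _ => ?_)
  have hqi : (0 : ℚ) < q i := by exact_mod_cast hq i
  simp only [Function.comp, Multiset.filter_map, Multiset.card_map]
  congr 1
  refine Multiset.filter_congr fun j _ => ?_
  rw [div_lt_iff₀ hqi]
  exact_mod_cast Iff.rfl

theorem mem_bind_iff {n d : ℕ} (q : Fin n → ℕ) (hq : ∀ i, 1 ≤ q i) (b : ℕ) :
    ((b : ℚ) ∈ (Finset.univ : Finset (Fin n)).val.bind fun i =>
        (Multiset.range (q i)).map fun j : ℕ => (j : ℚ) * d / q i)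
      ↔ ∃ i, ∃ j < q i, j * d = b * q i := by
  simp only [Multiset.mem_bind, Finset.mem_val, Finset.mem_univ, true_and, Multiset.mem_map,
    Multiset.mem_range]
  refine exists_congr fun i => exists_congr fun j => and_congr_right fun _ => ?_
  have hqi : (q i : ℚ) ≠ 0 := by exact_mod_cast (Nat.one_le_iff_ne_zero.1 (hq i))
  rw [div_eq_iff hqi]
  exact_mod_cast Iff.rfl

/-- In the theorem below the coercion `Multiset ℕ → Multiset ℚ` is applied to the range as a whole,
through the monad structure on `Multiset`; this pushes it into the mapped function. -/
theorem map_lift_range (m : ℕ) (f : ℚ → ℚ) :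
    Multiset.map f (do let a ← Multiset.range m; pure (a : ℚ))
      = (Multiset.range m).map fun j : ℕ => f j := by
  simp only [Multiset.bind_def, Multiset.pure_def, Multiset.bind_singleton, Multiset.map_map,
    Function.comp_def]

/-- Symmetry `p(b) + p(d̂ − b) = n` of the function counting the α's and β's of the
Picard–Fuchs equation below a given β-value. -/
theorem p_symmetry (n : ℕ) (hn : 2 ≤ n) (qhat : Fin n → ℕ) (hq : ∀ i, 1 ≤ qhat i)
    (dhat : ℕ) (hd : dhat = ∑ i, qhat i)
    (A D0 αs βs : Multiset ℚ)
    (hA : A = (Finset.univ : Finset (Fin n)).val.bind fun i =>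
        (Multiset.range (qhat i)).map fun j => (j : ℚ) * dhat / qhat i)
    (hD0 : D0 = (Multiset.range dhat).map fun b => (b : ℚ))
    (hαs : αs = A - A ∩ D0) (hβs : βs = D0 - A ∩ D0)
    (p : ℕ → ℤ)
    (hp : ∀ b : ℕ, p b = ((αs.filter fun x => x < (b : ℚ)).card : ℤ)
        - ((βs.filter fun x => x < (b : ℚ)).card : ℤ)) :
    ∀ b : ℕ, (b : ℚ) ∈ βs →
      ((dhat - b : ℕ) : ℚ) ∈ βs ∧ p b + p (dhat - b) = n := by
  simp only [map_lift_range] at hA hD0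
  intro b hb
  have hnd : D0.Nodup := by
    rw [hD0]
    exact (Multiset.nodup_range dhat).map Nat.cast_injective
  have hmemD (c : ℕ) : (c : ℚ) ∈ D0 ↔ c < dhat := by
    simp [hD0]
  have hmemA (c : ℕ) : (c : ℚ) ∈ A ↔ ∃ i, ∃ j < qhat i, j * dhat = c * qhat i := by
    rw [hA]
    exact mem_bind_iff qhat hq c
  have hmem (c : ℕ) : (c : ℚ) ∈ βs ↔ c < dhat ∧ ∀ i, ∀ j < qhat i, j * dhat ≠ c * qhat i := by
    rw [hβs, mem_sub_inter_iff hnd, hmemD, hmemA]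
    push Not
    rfl
  obtain ⟨hbd, hne⟩ := (hmem b).1 hb
  have hb0 : 0 < b := by
    rcases Nat.eq_zero_or_pos b with rfl | h
    · exact absurd (by simp) (hne ⟨0, by omega⟩ 0 (hq _))
    · exact h
  have hpc (c : ℕ) (hc : c ≤ dhat) : p c =
      ((∑ i, ((Multiset.range (qhat i)).filter fun j => j * dhat < c * qhat i).card : ℕ) : ℤ)
        - c := by
    rw [hp, hαs, hβs, card_filter_sub_inter, hA, hD0, card_filter_lt_range hc,
      card_filter_lt_bind qhat hq]
  refine ⟨(hmem _).2 ⟨by omega, fun i j hj h => ?_⟩, ?_⟩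
  -- The reflection `j ↦ q̂ᵢ - j` turns `d̂ - b ∈ A` into `b ∈ A`; it stays in range as `j ≠ 0`.
  · have hj0 : 0 < j := by
      rcases Nat.eq_zero_or_pos j with rfl | h0
      · have := Nat.mul_pos (Nat.sub_pos_of_lt hbd) (hq i)
        omega
      · exact h0
    refine hne i (qhat i - j) (by omega) ?_
    zify [hj.le, hbd.le] at h ⊢
    linarith
  · have key : (∑ i, ((Multiset.range (qhat i)).filter fun j => j * dhat < b * qhat i).card)
        + (∑ i, ((Multiset.range (qhat i)).filter
            fun j => j * dhat < (dhat - b) * qhat i).card) = dhat + n := by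
      rw [← Finset.sum_add_distrib, Finset.sum_congr rfl fun i _ =>
        card_filter_add_card_filter hb0 hbd (hne i) (hq i), Finset.sum_add_distrib, ← hd]
      simp
    rw [hpc b hbd.le, hpc (dhat - b) (Nat.sub_le _ _)]
    omega
end
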